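/- Let W be a Weyl candidate on 4-dimensional Minkowski space, T its Bel–Robinson tensor, and u : Fin 4 → ℝ a timelike future-directed vector (i.e. ∑_{a,b} η a b · u a · u b < 0 and u 0 > 0). Then ∑_{a,b,c,d} T a b c d · u a · u b · u c · u d = 0 if and only if W a b c d = 0 for all a, b, c, d; moreover ∑_{a,b,c,d} T a b c d · u a · u b · u c · u d ≥ 0, with strict inequality whenever W ≠ 0. -/

import Mathlib

/-!
Write `u·u` for `η(u, u) < 0`. The matrix `H = -(u·u) η + 2 u uᵀ` is positive definite: up to a
factor it is `η` with its sign changed along `u`. Hence the full contraction `|W|²_H` of `W` with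
itself by `H` is positive unless `W = 0`, and it remains to see that
`|W|²_H = 8 (u·u)² T(u, u, u, u)`.

Antisymmetry lets at most one `u` enter each index pair, so `|W|²_H` is a combination of `|W|²_η`,
`|u ⌟ W|²_η` and `|E|²_η`, where `E_{bd} = W_{abcd} u^a u^c`, while
`T(u, u, u, u) = 2 |E|²_η - (u·u)² |W|²_η / 8`. The two are matched by
`|u ⌟ W|²_η = (u·u) |W|²_η / 4`. Indeed every antisymmetric `F` satisfies
`|u ⌟ F|² - |u ⌟ ⋆F|² = (u·u) |F|² / 2`. For a trace-free `W` the left and right duals agree, so in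
`u ⌟ ⋆W` the dual can be moved to the other index pair, where it reverses the sign of the square.
-/

/-- The Minkowski metric `η` on `Fin 4`: `η 0 0 = -1`, `η a a = 1` for `a ≠ 0`,
and `η a b = 0` for `a ≠ b`. -/
def eta (a b : Fin 4) : ℝ := if a = b then (if a = 0 then -1 else 1) else 0

/-- A Weyl candidate on 4-dimensional Minkowski space. -/
def IsWeylCandidate (W : Fin 4 → Fin 4 → Fin 4 → Fin 4 → ℝ) : Prop :=
  (∀ a b c d, W a b c d = - W b a c d) ∧
  (∀ a b c d, W a b c d = - W a b d c) ∧
  (∀ a b c d, W a b c d = W c d a b) ∧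
  (∀ a b c d, W a b c d + W a c d b + W a d b c = 0) ∧
  (∀ b c, ∑ p : Fin 4, ∑ q : Fin 4, eta p q * W p b q c = 0)

/-- The Bel–Robinson tensor of a Weyl candidate `W`. -/
noncomputable def belRobinson (W : Fin 4 → Fin 4 → Fin 4 → Fin 4 → ℝ) (a b c d : Fin 4) : ℝ :=
  (∑ p : Fin 4, ∑ q : Fin 4, ∑ m : Fin 4, ∑ n : Fin 4,
      eta p q * eta m n * (W a p d m * W b q c n + W a m c p * W b n d q))
  - (1/8) * eta a b * eta c d *
      (∑ m : Fin 4, ∑ n : Fin 4, ∑ p : Fin 4, ∑ l : Fin 4, W m n p l *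
        (∑ m' : Fin 4, ∑ n' : Fin 4, ∑ p' : Fin 4, ∑ l' : Fin 4,
          eta m m' * eta n n' * eta p p' * eta l l' * W m' n' p' l'))

section TensorForms

/-- The form `k g + 2 u uᵀ`. For `g` the Minkowski metric and `k = -g(u, u) > 0` it is, up to a
factor, the Riemannian metric obtained from `g` by changing the sign along `u`. -/
def riemannianMatrix {ι : Type*} (g : Matrix ι ι ℝ) (k : ℝ) (u : ι → ℝ) : Matrix ι ι ℝ :=
  k • g + (2 : ℝ) • Matrix.vecMulVec u u

variable {ι V : Type*} [Fintype ι] [AddCommMonoid V] [Module ℝ V]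

/-- The form `(S, T) ↦ g^{ab} B(S_a, T_b)` on `V`-valued covectors. Starting from the multiplication
of `ℝ` and iterating contracts all indices of two tensors with `g`. -/
def contractForm (g : Matrix ι ι ℝ) (B : LinearMap.BilinForm ℝ V) : LinearMap.BilinForm ℝ (ι → V) :=
  ∑ a, ∑ b, g a b • B.compl₁₂ (LinearMap.proj a) (LinearMap.proj b)

/-- The contraction `u^a S_a` of the first index of a tensor with the vector `u`. -/
def contract (u : ι → ℝ) : (ι → V) →ₗ[ℝ] V := ∑ a, u a • LinearMap.proj a

variable (g : Matrix ι ι ℝ) (B : LinearMap.BilinForm ℝ V) (u : ι → ℝ)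

lemma contractForm_apply (S T : ι → V) :
    contractForm g B S T = ∑ a, ∑ b, g a b * B (S a) (T b) := by
  simp [contractForm, LinearMap.sum_apply]

lemma contractForm_eq_add {V₁ V₂ : Type*} [AddCommMonoid V₁] [Module ℝ V₁] [AddCommMonoid V₂]
    [Module ℝ V₂] {B₁ : LinearMap.BilinForm ℝ V₁} {B₂ : LinearMap.BilinForm ℝ V₂} {c₁ c₂ : ℝ}
    {S T : ι → V} {S₁ T₁ : ι → V₁} {S₂ T₂ : ι → V₂}
    (h : ∀ a b, B (S a) (T b) = c₁ * B₁ (S₁ a) (T₁ b) + c₂ * B₂ (S₂ a) (T₂ b)) :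
    contractForm g B S T = c₁ * contractForm g B₁ S₁ T₁ + c₂ * contractForm g B₂ S₂ T₂ := by
  simp only [contractForm_apply, h, mul_add, Finset.sum_add_distrib, Finset.mul_sum, mul_left_comm]

lemma contract_apply (S : ι → V) : contract u S = ∑ a, u a • S a := by
  simp [contract, LinearMap.sum_apply]

lemma contract_pi_apply {κ : Type*} (S : ι → κ → V) (b : κ) :
    contract u S b = contract u fun a => S a b := by
  simp only [contract_apply, Finset.sum_apply, Pi.smul_apply]

lemma contract_map {V' : Type*} [AddCommMonoid V'] [Module ℝ V'] (f : V →ₗ[ℝ] V') (S : ι → V) :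
    (contract u fun a => f (S a)) = f (contract u S) := by
  simp only [contract_apply, map_sum, map_smul]

lemma contractForm_comm (h : Matrix ι ι ℝ) (F G : ι → ι → V) :
    contractForm g (contractForm h B) F G =
      contractForm h (contractForm g B) (Function.swap F) (Function.swap G) := by
  simp only [contractForm_apply, Finset.mul_sum, Function.swap]
  calc ∑ a, ∑ b, ∑ c, ∑ d, g a b * (h c d * B (F a c) (G b d))
      = ∑ a, ∑ c, ∑ b, ∑ d, g a b * (h c d * B (F a c) (G b d)) :=
        Finset.sum_congr rfl fun a _ => Finset.sum_comm
    _ = ∑ c, ∑ a, ∑ d, ∑ b, g a b * (h c d * B (F a c) (G b d)) := by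
        rw [Finset.sum_comm]
        exact Finset.sum_congr rfl fun c _ => Finset.sum_congr rfl fun a _ => Finset.sum_comm
    _ = ∑ c, ∑ d, ∑ a, ∑ b, h c d * (g a b * B (F a c) (G b d)) := by
        refine Finset.sum_congr rfl fun c _ => ?_
        rw [Finset.sum_comm]
        simp only [mul_left_comm]

lemma contractForm_star_mul_self (A : Matrix ι ι ℝ) (S : ι → V) :
    contractForm (star A * A) B S S = ∑ c, B (contract (A c) S) (contract (A c) S) := by
  simp only [contractForm_apply, contract_apply, Matrix.mul_apply, Matrix.star_apply, star_trivial,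
    map_sum, map_smul, LinearMap.sum_apply, LinearMap.smul_apply, smul_eq_mul, Finset.sum_mul,
    Finset.mul_sum]
  rw [Finset.sum_comm, Finset.sum_comm_cycle]
  simp only [mul_assoc, mul_left_comm]

lemma contract_contract_row (A C : Matrix ι ι ℝ) (S : ι → V) (a : ι) :
    contract (C a) (fun c => contract (A c) S) = contract ((C * A) a) S := by
  simp only [contract_apply, Matrix.mul_apply, Finset.smul_sum, Finset.sum_smul, mul_smul]
  exact Finset.sum_comm

open scoped MatrixOrder Matrix.Norms.L2Operator in
lemma contractForm_pos {g : Matrix ι ι ℝ} (hg : g.PosDef) {B : LinearMap.BilinForm ℝ V}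
    (hB : ∀ v, v ≠ 0 → 0 < B v v) (S : ι → V) (hS : S ≠ 0) : 0 < contractForm g B S S := by
  classical
  obtain ⟨A, hA, rfl⟩ := CStarAlgebra.isStrictlyPositive_iff_eq_star_mul_self.mp
    hg.isStrictlyPositive
  obtain ⟨C, hCA⟩ := hA.exists_left_inv
  have hinj : ∃ c, contract (A c) S ≠ 0 := by
    by_contra! h
    refine hS (funext fun a => ?_)
    have hSa : contract ((C * A) a) S = 0 := by
      rw [← contract_contract_row, funext h]
      exact map_zero _
    simpa [hCA, contract_apply, Matrix.one_apply] using hSa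
  have hnonneg (v : V) : 0 ≤ B v v := by
    obtain rfl | hv := eq_or_ne v 0
    · simp
    · exact (hB v hv).le
  rw [contractForm_star_mul_self]
  obtain ⟨c, hc⟩ := hinj
  exact Finset.sum_pos' (fun _ _ => hnonneg _) ⟨c, Finset.mem_univ c, hB _ hc⟩

lemma contractForm_riemannianMatrix (k : ℝ) (S T : ι → V) :
    contractForm (riemannianMatrix g k u) B S T =
      k * contractForm g B S T + 2 * B (contract u S) (contract u T) := by
  simp only [riemannianMatrix, contractForm_apply, contract_apply, Matrix.add_apply,
    Matrix.smul_apply, Matrix.vecMulVec_apply, smul_eq_mul, add_mul, Finset.sum_add_distrib,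
    Finset.mul_sum, map_sum, map_smul, LinearMap.sum_apply, LinearMap.smul_apply, mul_assoc]
  rw [Finset.sum_comm (f := fun a b => 2 * (u a * (u b * B (S a) (T b))))]
  simp only [mul_left_comm]

end TensorForms

section SkewTensors

variable {ι V : Type*} [Fintype ι] [AddCommGroup V] [Module ℝ V]

/-- Antisymmetry in the first two indices of a tensor; further indices are hidden in `V`. -/
def IsSkewTensor (F : ι → ι → V) : Prop := ∀ a b, F a b = -F b a

variable (g : Matrix ι ι ℝ) (B : LinearMap.BilinForm ℝ V) {u : ι → ℝ}

lemma IsSkewTensor.contract_apply {F : ι → ι → V} (hF : IsSkewTensor F) (a : ι) :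
    contract u (F a) = -contract u F a := by
  rw [contract_pi_apply, ← map_neg]
  exact congrArg (contract u) (funext fun b => hF a b)

lemma IsSkewTensor.contract_contract {F : ι → ι → V} (hF : IsSkewTensor F) :
    contract u (contract u F) = 0 := by
  have h : contract u (contract u F) = -contract u (contract u F) :=
    calc contract u (contract u F) = contract u fun a => contract u (F a) :=
          (contract_map u (contract u) F).symm
      _ = -contract u (contract u F) := by
          rw [← map_neg]
          exact congrArg (contract u) (funext hF.contract_apply)
  have := IsAddTorsionFree.of_isTorsionFree ℝ V
  exact self_eq_neg.mp h

lemma IsSkewTensor.contractForm_riemannianMatrix {F G : ι → ι → V} (hF : IsSkewTensor F)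
    (hG : IsSkewTensor G) (k : ℝ) :
    contractForm (riemannianMatrix g k u) (contractForm (riemannianMatrix g k u) B) F G =
      k ^ 2 * contractForm g (contractForm g B) F G +
        4 * k * contractForm g B (contract u F) (contract u G) := by
  have hinner : contractForm g (contractForm (riemannianMatrix g k u) B) F G =
      k * contractForm g (contractForm g B) F G +
        2 * contractForm g B (contract u F) (contract u G) := by
    refine contractForm_eq_add _ _ fun a b => ?_
    rw [_root_.contractForm_riemannianMatrix, hF.contract_apply, hG.contract_apply, map_neg,
      map_neg, LinearMap.neg_apply, neg_neg]
  rw [_root_.contractForm_riemannianMatrix, hinner, _root_.contractForm_riemannianMatrix,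
    hF.contract_contract, map_zero, LinearMap.zero_apply]
  ring

end SkewTensors

section RankFour

lemma IsSkewTensor.apply_apply_of_pair_symm {ι : Type*} {W : ι → ι → ι → ι → ℝ}
    (hW : IsSkewTensor W) (hpair : ∀ a b c d, W a b c d = W c d a b) (a b : ι) :
    IsSkewTensor (W a b) := fun c d => by
  rw [hpair, hW, Pi.neg_apply, Pi.neg_apply, hpair]

variable {ι : Type*} [Fintype ι] (g : Matrix ι ι ℝ)

/-- The scalar product `g^{ab} x_a y_b` of covectors. -/
def tensorForm₁ : LinearMap.BilinForm ℝ (ι → ℝ) := contractForm g (LinearMap.mul ℝ ℝ)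

/-- The scalar product of rank-two tensors induced by `g`. -/
def tensorForm₂ : LinearMap.BilinForm ℝ (ι → ι → ℝ) := contractForm g (tensorForm₁ g)

/-- The scalar product of rank-three tensors induced by `g`. -/
def tensorForm₃ : LinearMap.BilinForm ℝ (ι → ι → ι → ℝ) := contractForm g (tensorForm₂ g)

/-- The scalar product of rank-four tensors induced by `g`. -/
def tensorForm₄ : LinearMap.BilinForm ℝ (ι → ι → ι → ι → ℝ) := contractForm g (tensorForm₃ g)

/-- The electric part `E_{bd} = W_{abcd} u^a u^c` of `W` relative to `u`, not normalized by the
length of `u`. -/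
def electricPart (u : ι → ℝ) (W : ι → ι → ι → ι → ℝ) (b : ι) : ι → ℝ :=
  contract u (contract u W b)

lemma tensorForm₄_pos {g : Matrix ι ι ℝ} (hg : g.PosDef) {W : ι → ι → ι → ι → ℝ} (hW : W ≠ 0) :
    0 < tensorForm₄ g W W :=
  contractForm_pos hg (contractForm_pos hg (contractForm_pos hg (contractForm_pos hg
    fun _ => mul_self_pos.mpr))) W hW

lemma tensorForm₃_rotate (X : ι → ι → ι → ℝ) :
    tensorForm₃ g (fun a b d => X d a b) (fun a b d => X d a b) = tensorForm₃ g X X :=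
  calc tensorForm₃ g (fun a b d => X d a b) (fun a b d => X d a b)
      = tensorForm₃ g (fun a d b => X d a b) (fun a d b => X d a b) := by
        rw [tensorForm₃, contractForm_apply, contractForm_apply]
        exact Finset.sum_congr rfl fun a _ => Finset.sum_congr rfl fun b _ =>
          congrArg (g a b * ·) (contractForm_comm g (LinearMap.mul ℝ ℝ) g _ _)
    _ = tensorForm₃ g X X := contractForm_comm g (tensorForm₁ g) g _ _

lemma contract_apply_of_pair_symm {W : ι → ι → ι → ι → ℝ}
    (hpair : ∀ a b c d, W a b c d = W c d a b) (u : ι → ℝ) (a b d : ι) :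
    contract u (W a b) d = contract u W d a b := by
  simp only [contract_pi_apply, hpair a b]

lemma IsSkewTensor.contract_of_pair_symm {W : ι → ι → ι → ι → ℝ} (hW : IsSkewTensor W)
    (hpair : ∀ a b c d, W a b c d = W c d a b) (u : ι → ℝ) (b : ι) :
    IsSkewTensor (contract u W b) := fun c d => by
  simp only [contract_pi_apply, ← map_neg]
  exact congrArg (contract u) (funext fun a => hW.apply_apply_of_pair_symm hpair a b c d)

lemma tensorForm₄_riemannianMatrix {W : ι → ι → ι → ι → ℝ} (hW : IsSkewTensor W)
    (hpair : ∀ a b c d, W a b c d = W c d a b) (k : ℝ) (u : ι → ℝ) :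
    tensorForm₄ (riemannianMatrix g k u) W W =
      k ^ 4 * tensorForm₄ g W W + 8 * k ^ 3 * tensorForm₃ g (contract u W) (contract u W) +
        16 * k ^ 2 * tensorForm₂ g (electricPart u W) (electricPart u W) := by
  have hright (a b : ι) : IsSkewTensor (W a b) := hW.apply_apply_of_pair_symm hpair a b
  have hrightContract (b : ι) : IsSkewTensor (contract u W b) :=
    hW.contract_of_pair_symm hpair u b
  have hfour : contractForm g (contractForm g (tensorForm₂ (riemannianMatrix g k u))) W W =
      k ^ 2 * tensorForm₄ g W W + 4 * k * tensorForm₃ g (contract u W) (contract u W) := by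
    rw [← tensorForm₃_rotate g (contract u W)]
    refine contractForm_eq_add _ _ fun a a' => contractForm_eq_add _ _ fun b b' => ?_
    simp only [← contract_apply_of_pair_symm hpair]
    exact (hright a b).contractForm_riemannianMatrix g _ (hright a' b') k
  have hthree :
      contractForm g (tensorForm₂ (riemannianMatrix g k u)) (contract u W) (contract u W) =
      k ^ 2 * tensorForm₃ g (contract u W) (contract u W) +
        4 * k * tensorForm₂ g (electricPart u W) (electricPart u W) :=
    contractForm_eq_add _ _ fun b b' =>
      (hrightContract b).contractForm_riemannianMatrix g _ (hrightContract b') k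
  rw [tensorForm₄, tensorForm₃, hW.contractForm_riemannianMatrix g _ hW, hfour, hthree]
  ring

end RankFour

section Hodge

/-- The Minkowski metric as a matrix. -/
def minkowskiMatrix : Matrix (Fin 4) (Fin 4) ℝ := Matrix.of eta

lemma sum_minkowskiMatrix_mul (f : Fin 4 → Fin 4 → ℝ) :
    ∑ a, ∑ b, minkowskiMatrix a b * f a b = -f 0 0 + f 1 1 + f 2 2 + f 3 3 := by
  simp [Fin.sum_univ_four, minkowskiMatrix, eta]

variable {V : Type*} [AddCommGroup V] [Module ℝ V]

/-- The Hodge dual `⋆F` of an antisymmetric tensor on Minkowski space: `(⋆F)₀₁ = F₂₃`,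
`(⋆F)₂₃ = -F₀₁`, and cyclically in `1, 2, 3`. -/
def hodgeDual : (Fin 4 → Fin 4 → V) →ₗ[ℝ] Fin 4 → Fin 4 → V where
  toFun F :=
    ![![0, F 2 3, F 3 1, F 1 2],
      ![F 3 2, 0, F 3 0, F 0 2],
      ![F 1 3, F 0 3, 0, F 1 0],
      ![F 2 1, F 2 0, F 0 1, 0]]
  map_add' F G := by simp
  map_smul' c F := by simp

lemma IsSkewTensor.apply_self {F : Fin 4 → Fin 4 → V} (hF : IsSkewTensor F) (a : Fin 4) :
    F a a = 0 := by
  have := IsAddTorsionFree.of_isTorsionFree ℝ V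
  exact self_eq_neg.mp (hF a a)

lemma IsSkewTensor.ext_fin_four {F G : Fin 4 → Fin 4 → V} (hF : IsSkewTensor F)
    (hG : IsSkewTensor G) (h₀₁ : F 0 1 = G 0 1) (h₀₂ : F 0 2 = G 0 2) (h₀₃ : F 0 3 = G 0 3)
    (h₁₂ : F 1 2 = G 1 2) (h₃₁ : F 3 1 = G 3 1) (h₂₃ : F 2 3 = G 2 3) : F = G := by
  have hlt : ∀ a b : Fin 4, a < b → F a b = G a b := by
    have h₁₃ : F 1 3 = G 1 3 := by rw [hF, hG, h₃₁]
    intro a b hab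
    fin_cases a <;> fin_cases b <;> first | assumption | exact absurd hab (by decide)
  funext a b
  obtain hab | rfl | hab := lt_trichotomy a b
  · exact hlt a b hab
  · rw [hF.apply_self, hG.apply_self]
  · rw [hF, hG, hlt b a hab]

lemma IsSkewTensor.hodgeDual {F : Fin 4 → Fin 4 → V} (hF : IsSkewTensor F) :
    IsSkewTensor (hodgeDual F) := fun a b => by
  fin_cases a <;> fin_cases b <;> simp [_root_.hodgeDual, ← hF _ _]

lemma contractForm_hodgeDual (B : LinearMap.BilinForm ℝ V) {F G : Fin 4 → Fin 4 → V}
    (hF : IsSkewTensor F) (hG : IsSkewTensor G) :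
    contractForm minkowskiMatrix (contractForm minkowskiMatrix B) (hodgeDual F) (hodgeDual G) =
      -contractForm minkowskiMatrix (contractForm minkowskiMatrix B) F G := by
  simp only [contractForm_apply, sum_minkowskiMatrix_mul]
  simp [hodgeDual, hF.apply_self, hG.apply_self]
  ring

lemma contractForm_contract_sub_hodgeDual (B : LinearMap.BilinForm ℝ V) {F : Fin 4 → Fin 4 → V}
    (hF : IsSkewTensor F) (u : Fin 4 → ℝ) :
    contractForm minkowskiMatrix B (contract u F) (contract u F) -
        contractForm minkowskiMatrix B (contract u (hodgeDual F)) (contract u (hodgeDual F)) =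
      1 / 2 * tensorForm₁ minkowskiMatrix u u *
        contractForm minkowskiMatrix (contractForm minkowskiMatrix B) F F := by
  have h₁₀ : F 1 0 = -F 0 1 := hF 1 0
  have h₂₀ : F 2 0 = -F 0 2 := hF 2 0
  have h₃₀ : F 3 0 = -F 0 3 := hF 3 0
  have h₂₁ : F 2 1 = -F 1 2 := hF 2 1
  have h₁₃ : F 1 3 = -F 3 1 := hF 1 3
  have h₃₂ : F 3 2 = -F 2 3 := hF 3 2
  simp only [tensorForm₁, contractForm_apply, sum_minkowskiMatrix_mul, contract_apply]
  simp [Fin.sum_univ_four, hodgeDual, hF.apply_self, h₁₀, h₂₀, h₃₀, h₂₁, h₁₃, h₃₂]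
  ring

lemma hodgeDual_left_eq_right {W : Fin 4 → Fin 4 → Fin 4 → Fin 4 → ℝ} (hW : IsSkewTensor W)
    (hpair : ∀ a b c d, W a b c d = W c d a b)
    (htr : ∀ b c, ∑ p : Fin 4, ∑ q : Fin 4, eta p q * W p b q c = 0) :
    hodgeDual W = fun a b => hodgeDual (W a b) := by
  have hright (a b : Fin 4) : IsSkewTensor (W a b) := hW.apply_apply_of_pair_symm hpair a b
  have htr' (b c : Fin 4) : -W 0 b 0 c + W 1 b 1 c + W 2 b 2 c + W 3 b 3 c = 0 :=
    (sum_minkowskiMatrix_mul fun p q => W p b q c).symm.trans (htr b c)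
  have hskew (a b c d : Fin 4) : W a b c d = -W b a c d := congrFun₂ (hW a b) c d
  have hleft : IsSkewTensor fun a b => hodgeDual (W a b) := fun a b =>
    (congrArg hodgeDual (hW a b)).trans (map_neg hodgeDual (W b a))
  -- Components with two equal index pairs agree by pair symmetry, the others by trace-freeness.
  refine hW.hodgeDual.ext_fin_four hleft ?_ ?_ ?_ ?_ ?_ ?_ <;>
    refine IsSkewTensor.ext_fin_four (hright _ _) (hright _ _).hodgeDual ?_ ?_ ?_ ?_ ?_ ?_ <;>
    simp only [hodgeDual, LinearMap.coe_mk, AddHom.coe_mk, Matrix.cons_val] <;> grind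

lemma tensorForm₃_contract {W : Fin 4 → Fin 4 → Fin 4 → Fin 4 → ℝ} (hW : IsSkewTensor W)
    (hpair : ∀ a b c d, W a b c d = W c d a b)
    (htr : ∀ b c, ∑ p : Fin 4, ∑ q : Fin 4, eta p q * W p b q c = 0) (u : Fin 4 → ℝ) :
    tensorForm₃ minkowskiMatrix (contract u W) (contract u W) =
      1 / 4 * tensorForm₁ minkowskiMatrix u u * tensorForm₄ minkowskiMatrix W W := by
  have hcontract : contract u (hodgeDual W) = fun b => hodgeDual (contract u W b) := by
    rw [hodgeDual_left_eq_right hW hpair htr]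
    funext b
    rw [contract_pi_apply, contract_pi_apply, contract_map]
  have hskew (b : Fin 4) : IsSkewTensor (contract u W b) := hW.contract_of_pair_symm hpair u b
  have hdual : tensorForm₃ minkowskiMatrix (contract u (hodgeDual W)) (contract u (hodgeDual W)) =
      -tensorForm₃ minkowskiMatrix (contract u W) (contract u W) := by
    simp only [hcontract, tensorForm₃, contractForm_apply _ (tensorForm₂ _),
      ← Finset.sum_neg_distrib, ← mul_neg]
    exact Finset.sum_congr rfl fun b _ => Finset.sum_congr rfl fun c _ =>
      congrArg _ (contractForm_hodgeDual _ (hskew b) (hskew c))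
  have hsub : tensorForm₃ minkowskiMatrix (contract u W) (contract u W) -
      tensorForm₃ minkowskiMatrix (contract u (hodgeDual W)) (contract u (hodgeDual W)) =
      1 / 2 * tensorForm₁ minkowskiMatrix u u * tensorForm₄ minkowskiMatrix W W := by
    rw [tensorForm₄, tensorForm₃]
    -- At default transparency the unifier unfolds the nested contractions and times out.
    with_reducible exact contractForm_contract_sub_hodgeDual (tensorForm₂ minkowskiMatrix) hW u
  linarith

end Hodge

section PositiveDefinite

lemma minkowskiMatrix_isHermitian : minkowskiMatrix.IsHermitian := .ext fun a b => by
  obtain rfl | hab := eq_or_ne a b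
  · exact star_trivial _
  · simp [minkowskiMatrix, eta, hab, hab.symm]

lemma dotProduct_riemannianMatrix_mulVec (k : ℝ) (u v : Fin 4 → ℝ) :
    v ⬝ᵥ (riemannianMatrix minkowskiMatrix k u).mulVec v =
      k * (-v 0 ^ 2 + v 1 ^ 2 + v 2 ^ 2 + v 3 ^ 2) + 2 * (u ⬝ᵥ v) ^ 2 := by
  have hη : v ⬝ᵥ minkowskiMatrix.mulVec v = -v 0 ^ 2 + v 1 ^ 2 + v 2 ^ 2 + v 3 ^ 2 := by
    simp [dotProduct, Matrix.mulVec, Fin.sum_univ_four, minkowskiMatrix, eta, sq]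
  simp only [riemannianMatrix, Matrix.add_mulVec, Matrix.smul_mulVec, dotProduct_add,
    dotProduct_smul, Matrix.vecMulVec_mulVec, hη, smul_eq_mul, op_smul_eq_smul,
    dotProduct_comm v u, ← sq]

lemma mul_minkowski_add_two_mul_sq_pos {u v : Fin 4 → ℝ} {k : ℝ}
    (hk : k = u 0 ^ 2 - u 1 ^ 2 - u 2 ^ 2 - u 3 ^ 2) (hk_pos : 0 < k) (hv : v ≠ 0) :
    0 < k * (-v 0 ^ 2 + v 1 ^ 2 + v 2 ^ 2 + v 3 ^ 2) + 2 * (u ⬝ᵥ v) ^ 2 := by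
  set q := k * (-v 0 ^ 2 + v 1 ^ 2 + v 2 ^ 2 + v 3 ^ 2) + 2 * (u ⬝ᵥ v) ^ 2 with hq
  set s := u ⬝ᵥ v
  set r := (u 1 * v 2 - u 2 * v 1) ^ 2 + (u 2 * v 3 - u 3 * v 2) ^ 2 +
    (u 3 * v 1 - u 1 * v 3) ^ 2 with hr
  have hu₀ : 0 < u 0 ^ 2 := by linarith [sq_nonneg (u 1), sq_nonneg (u 2), sq_nonneg (u 3)]
  have hs_eq : s = u 0 * v 0 + u 1 * v 1 + u 2 * v 2 + u 3 * v 3 := Fin.sum_univ_four _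
  have hsos : u 0 ^ 2 * q = (k * v 1 + s * u 1) ^ 2 + (k * v 2 + s * u 2) ^ 2 +
      (k * v 3 + s * u 3) ^ 2 + u 0 ^ 2 * s ^ 2 + k * r := by
    rw [hq, hr, hk, hs_eq]
    ring
  suffices 0 < u 0 ^ 2 * q from pos_of_mul_pos_right this hu₀.le
  rw [hsos]
  obtain hs_zero | hs_ne := eq_or_ne s 0
  · have hspace : v 1 ≠ 0 ∨ v 2 ≠ 0 ∨ v 3 ≠ 0 := by
      by_contra! hspace
      obtain ⟨h₁, h₂, h₃⟩ := hspace
      have h₀ : v 0 = 0 := by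
        simpa [hs_zero, h₁, h₂, h₃, pow_ne_zero_iff two_ne_zero |>.mp hu₀.ne'] using hs_eq
      refine hv (funext fun i => ?_)
      fin_cases i <;> assumption
    simp only [hs_zero, zero_mul, add_zero]
    obtain h | h | h := hspace <;> positivity
  · positivity

lemma posDef_riemannianMatrix_minkowskiMatrix {u : Fin 4 → ℝ}
    (hu : tensorForm₁ minkowskiMatrix u u < 0) :
    (riemannianMatrix minkowskiMatrix (-tensorForm₁ minkowskiMatrix u u) u).PosDef := by
  have hnorm : -tensorForm₁ minkowskiMatrix u u = u 0 ^ 2 - u 1 ^ 2 - u 2 ^ 2 - u 3 ^ 2 := by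
    rw [tensorForm₁, contractForm_apply, sum_minkowskiMatrix_mul]
    simp only [LinearMap.mul_apply']
    ring
  have hvec : (Matrix.vecMulVec u u).IsHermitian := .ext fun a b => mul_comm _ _
  refine .of_dotProduct_mulVec_pos
    ((minkowskiMatrix_isHermitian.smul (.all _)).add (hvec.smul (.all 2))) fun v hv => ?_
  rw [star_trivial, dotProduct_riemannianMatrix_mulVec]
  exact mul_minkowski_add_two_mul_sq_pos hnorm (neg_pos.mpr hu) hv

end PositiveDefinite

section BelRobinson

variable {ι : Type*} [Fintype ι]

lemma sum_comm_four (F : ι → ι → ι → ι → ι → ι → ι → ι → ℝ) :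
    ∑ a, ∑ b, ∑ c, ∑ d, ∑ p, ∑ q, ∑ m, ∑ n, F a b c d p q m n =
      ∑ p, ∑ q, ∑ m, ∑ n, ∑ a, ∑ b, ∑ c, ∑ d, F a b c d p q m n := by
  calc _ = ∑ x : ι × ι × ι × ι, ∑ y : ι × ι × ι × ι,
        F x.1 x.2.1 x.2.2.1 x.2.2.2 y.1 y.2.1 y.2.2.1 y.2.2.2 := by
        simp only [Fintype.sum_prod_type]
    _ = _ := by
        rw [Finset.sum_comm]
        simp only [Fintype.sum_prod_type]

lemma sum_mul_mul_quadratic (x y : ι → ι → ℝ) (u : ι → ℝ) :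
    ∑ a, ∑ b, ∑ c, ∑ d, x a b * y c d * u a * u b * u c * u d =
      (∑ a, ∑ b, x a b * u a * u b) * ∑ c, ∑ d, y c d * u c * u d := by
  simp only [Finset.sum_mul]
  simp only [Finset.mul_sum]
  refine Finset.sum_congr rfl fun a _ => Finset.sum_congr rfl fun b _ =>
    Finset.sum_congr rfl fun c _ => Finset.sum_congr rfl fun d _ => ?_
  ring

lemma electricPart_apply (u : ι → ℝ) (W : ι → ι → ι → ι → ℝ) (p m : ι) :
    electricPart u W p m = ∑ a, ∑ d, W a p d m * u a * u d := by
  simp only [electricPart, contract_pi_apply]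
  simp only [contract_apply, smul_eq_mul, Finset.mul_sum]
  rw [Finset.sum_comm]
  refine Finset.sum_congr rfl fun a _ => Finset.sum_congr rfl fun d _ => ?_
  ring

lemma sum_mul_electricPart_left (W : ι → ι → ι → ι → ℝ) (u : ι → ℝ) (p q m n : ι) :
    ∑ a, ∑ b, ∑ c, ∑ d, W a p d m * W b q c n * u a * u b * u c * u d =
      electricPart u W p m * electricPart u W q n := by
  rw [electricPart_apply, electricPart_apply, ← sum_mul_mul_quadratic]
  refine Finset.sum_congr rfl fun a _ => ?_
  rw [Finset.sum_comm_cycle]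
  refine Finset.sum_congr rfl fun b _ => Finset.sum_congr rfl fun c _ =>
    Finset.sum_congr rfl fun d _ => ?_
  ring

lemma sum_mul_electricPart_right (W : ι → ι → ι → ι → ℝ) (u : ι → ℝ) (p q m n : ι) :
    ∑ a, ∑ b, ∑ c, ∑ d, W a m c p * W b n d q * u a * u b * u c * u d =
      electricPart u W m p * electricPart u W n q := by
  rw [electricPart_apply, electricPart_apply, ← sum_mul_mul_quadratic]
  refine Finset.sum_congr rfl fun a _ => ?_
  rw [Finset.sum_comm]
  refine Finset.sum_congr rfl fun b _ => Finset.sum_congr rfl fun c _ =>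
    Finset.sum_congr rfl fun d _ => ?_
  ring

lemma tensorForm₁_apply (g : Matrix ι ι ℝ) (x : ι → ℝ) :
    tensorForm₁ g x x = ∑ a, ∑ b, g a b * x a * x b := by
  simp only [tensorForm₁, contractForm_apply, LinearMap.mul_apply', mul_assoc]

lemma tensorForm₂_apply (g : Matrix ι ι ℝ) (x : ι → ι → ℝ) :
    tensorForm₂ g x x = ∑ p, ∑ q, ∑ m, ∑ n, g p q * g m n * (x p m * x q n) := by
  simp only [tensorForm₂, tensorForm₁, contractForm_apply, LinearMap.mul_apply', Finset.mul_sum,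
    mul_assoc]

lemma sum_eta_mul (a : Fin 4) (f : Fin 4 → ℝ) : ∑ b, eta a b * f b = eta a a * f a := by
  rw [Finset.sum_eq_single a (fun b _ hb => by simp [eta, hb.symm]) (by simp)]

lemma tensorForm₄_minkowskiMatrix (W : Fin 4 → Fin 4 → Fin 4 → Fin 4 → ℝ) :
    tensorForm₄ minkowskiMatrix W W = ∑ m, ∑ n, ∑ p, ∑ l, W m n p l *
      ∑ m', ∑ n', ∑ p', ∑ l', eta m m' * eta n n' * eta p p' * eta l l' * W m' n' p' l' := by
  simp only [tensorForm₄, tensorForm₃, tensorForm₂, tensorForm₁, contractForm_apply,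
    minkowskiMatrix, Matrix.of_apply, LinearMap.mul_apply', mul_assoc, ← Finset.mul_sum,
    sum_eta_mul]
  simp only [Finset.mul_sum]
  refine Finset.sum_congr rfl fun m _ => Finset.sum_congr rfl fun n _ =>
    Finset.sum_congr rfl fun p _ => Finset.sum_congr rfl fun l _ => ?_
  ring

lemma sum_belRobinson (W : Fin 4 → Fin 4 → Fin 4 → Fin 4 → ℝ) (u : Fin 4 → ℝ) :
    ∑ a, ∑ b, ∑ c, ∑ d, belRobinson W a b c d * u a * u b * u c * u d =
      2 * tensorForm₂ minkowskiMatrix (electricPart u W) (electricPart u W) -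
        1 / 8 * tensorForm₁ minkowskiMatrix u u ^ 2 * tensorForm₄ minkowskiMatrix W W := by
  have hsummand (a b c d : Fin 4) : belRobinson W a b c d * u a * u b * u c * u d =
      (∑ p, ∑ q, ∑ m, ∑ n, (eta p q * eta m n * (W a p d m * W b q c n * u a * u b * u c * u d) +
        eta p q * eta m n * (W a m c p * W b n d q * u a * u b * u c * u d))) -
      1 / 8 * tensorForm₄ minkowskiMatrix W W * (eta a b * eta c d * u a * u b * u c * u d) := by
    rw [belRobinson, ← tensorForm₄_minkowskiMatrix, sub_mul, sub_mul, sub_mul, sub_mul]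
    congr 1
    · simp only [Finset.sum_mul]
      refine Finset.sum_congr rfl fun p _ => Finset.sum_congr rfl fun q _ =>
        Finset.sum_congr rfl fun m _ => Finset.sum_congr rfl fun n _ => ?_
      ring
    · ring
  have hleft : ∑ p, ∑ q, ∑ m, ∑ n, eta p q * eta m n *
      (electricPart u W p m * electricPart u W q n) =
      tensorForm₂ minkowskiMatrix (electricPart u W) (electricPart u W) :=
    (tensorForm₂_apply minkowskiMatrix _).symm
  have hright : ∑ p, ∑ q, ∑ m, ∑ n, eta p q * eta m n *
      (electricPart u W m p * electricPart u W n q) =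
      tensorForm₂ minkowskiMatrix (electricPart u W) (electricPart u W) :=
    (tensorForm₂_apply minkowskiMatrix (Function.swap (electricPart u W))).symm.trans
      (contractForm_comm _ _ _ _ _)
  have hscalar : ∑ a, ∑ b, eta a b * u a * u b = tensorForm₁ minkowskiMatrix u u :=
    (tensorForm₁_apply minkowskiMatrix u).symm
  simp only [hsummand, Finset.sum_sub_distrib]
  rw [sum_comm_four]
  simp only [Finset.sum_add_distrib, ← Finset.mul_sum, sum_mul_electricPart_left,
    sum_mul_electricPart_right, sum_mul_mul_quadratic, hleft, hright, hscalar]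
  ring

lemma tensorForm₄_eq_sum_belRobinson {W : Fin 4 → Fin 4 → Fin 4 → Fin 4 → ℝ} (hW : IsSkewTensor W)
    (hpair : ∀ a b c d, W a b c d = W c d a b)
    (htr : ∀ b c, ∑ p : Fin 4, ∑ q : Fin 4, eta p q * W p b q c = 0) (u : Fin 4 → ℝ) :
    tensorForm₄ (riemannianMatrix minkowskiMatrix (-tensorForm₁ minkowskiMatrix u u) u) W W =
      8 * tensorForm₁ minkowskiMatrix u u ^ 2 *
        ∑ a, ∑ b, ∑ c, ∑ d, belRobinson W a b c d * u a * u b * u c * u d := by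
  rw [tensorForm₄_riemannianMatrix _ hW hpair, tensorForm₃_contract hW hpair htr, sum_belRobinson]
  ring

theorem stmt_12_general {W : Fin 4 → Fin 4 → Fin 4 → Fin 4 → ℝ}
    (hskew : ∀ a b c d, W a b c d = -W b a c d) (hpair : ∀ a b c d, W a b c d = W c d a b)
    (htr : ∀ b c, ∑ p : Fin 4, ∑ q : Fin 4, eta p q * W p b q c = 0) {u : Fin 4 → ℝ}
    (hu : ∑ a, ∑ b, eta a b * u a * u b < 0) :
    ((∑ a, ∑ b, ∑ c, ∑ d, belRobinson W a b c d * u a * u b * u c * u d) = 0 ↔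
      ∀ a b c d, W a b c d = 0) ∧
    0 ≤ (∑ a, ∑ b, ∑ c, ∑ d, belRobinson W a b c d * u a * u b * u c * u d) ∧
    (W ≠ 0 → 0 < ∑ a, ∑ b, ∑ c, ∑ d, belRobinson W a b c d * u a * u b * u c * u d) := by
  have hu' : tensorForm₁ minkowskiMatrix u u < 0 :=
    (tensorForm₁_apply minkowskiMatrix u).trans_lt hu
  have hkey := tensorForm₄_eq_sum_belRobinson (fun a b => funext₂ (hskew a b)) hpair htr u
  have hpos : W ≠ 0 → 0 < ∑ a, ∑ b, ∑ c, ∑ d, belRobinson W a b c d * u a * u b * u c * u d := by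
    intro hW
    have h := tensorForm₄_pos (posDef_riemannianMatrix_minkowskiMatrix hu') hW
    rw [hkey] at h
    exact pos_of_mul_pos_right h (by positivity)
  have hzero (hW : W = 0) :
      ∑ a, ∑ b, ∑ c, ∑ d, belRobinson W a b c d * u a * u b * u c * u d = 0 := by
    simp [hW, belRobinson]
  have hiff : W = 0 ↔ ∀ a b c d, W a b c d = 0 := by simp only [funext_iff, Pi.zero_apply]
  rw [← hiff]
  refine ⟨⟨fun h => by_contra fun hW => (hpos hW).ne' h, hzero⟩, ?_, hpos⟩
  obtain hW | hW := eq_or_ne W 0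
  · exact (hzero hW).ge
  · exact (hpos hW).le

end BelRobinson

/-- For a timelike future-directed vector `u`, the superenergy density of the
Bel–Robinson tensor of a Weyl candidate `W` with respect to `u` vanishes if and only
if `W = 0`; moreover it is non-negative, and strictly positive whenever `W ≠ 0`. -/
theorem stmt_12 (W : Fin 4 → Fin 4 → Fin 4 → Fin 4 → ℝ) (hW : IsWeylCandidate W)
    (u : Fin 4 → ℝ)
    (hu : (∑ a : Fin 4, ∑ b : Fin 4, eta a b * u a * u b) < 0 ∧ 0 < u 0) :
    ((∑ a : Fin 4, ∑ b : Fin 4, ∑ c : Fin 4, ∑ d : Fin 4,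
        belRobinson W a b c d * u a * u b * u c * u d) = 0
      ↔ ∀ a b c d, W a b c d = 0) ∧
    0 ≤ (∑ a : Fin 4, ∑ b : Fin 4, ∑ c : Fin 4, ∑ d : Fin 4,
        belRobinson W a b c d * u a * u b * u c * u d) ∧
    (W ≠ 0 → 0 < ∑ a : Fin 4, ∑ b : Fin 4, ∑ c : Fin 4, ∑ d : Fin 4,
        belRobinson W a b c d * u a * u b * u c * u d) :=
  stmt_12_general hW.1 hW.2.2.1 hW.2.2.2.2 hu.1
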